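/- Let G be a bidirectional graph on n vertices and 0 < α ≤ 1 a real constant with ⌊αn⌋ ≥ 2. If the number of directed edges satisfies |E| > n²·(⌊αn⌋−2)/(⌊αn⌋−1), then C(G) ≥ ⌊αn⌋. -/

import Mathlib

noncomputable section

/-- Closed out-neighborhood of `v` in the graph with vertex set `S` and edge relation `E`. -/
def Nbr {V : Type*} (E : V → V → Prop) (S : Set V) (v : V) : Set V :=
  {v} ∪ {u | u ∈ S ∧ E v u}

/-- A valid `ℓ`-coloring of the graph `(S, E)`: every color appears on every closed
out-neighborhood. -/
def ValidColoring {V : Type*} (E : V → V → Prop) (S : Set V) (ℓ : ℕ) (c : V → Fin ℓ) : Prop :=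
  ∀ v ∈ S, ∀ i : Fin ℓ, ∃ u ∈ Nbr E S v, u ∈ S ∧ c u = i

/-- `(S, E')` is a nonempty subgraph of the graph `E` (on vertex set the whole type). -/
def IsSubgraph {V : Type*} (E : V → V → Prop) (S : Set V) (E' : V → V → Prop) : Prop :=
  S.Nonempty ∧ ∀ u v, E' u v → E u v ∧ u ∈ S ∧ v ∈ S

/-- Some nonempty subgraph of `E` admits a valid `ℓ`-coloring. -/
def HasValid {V : Type*} (E : V → V → Prop) (ℓ : ℕ) : Prop :=
  ∃ (S : Set V) (E' : V → V → Prop) (c : V → Fin ℓ),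
    IsSubgraph E S E' ∧ ValidColoring E' S ℓ c

/-- The writing capacity of the directed graph `E`. -/
def Cap {V : Type*} (E : V → V → Prop) : ℕ := sSup {ℓ | HasValid E ℓ}

/-- Out-degree. -/
def outDeg {V : Type*} (E : V → V → Prop) (v : V) : ℕ := Set.ncard {u | E v u}

/-- Maximum out-degree. -/
def maxOutDeg {V : Type*} [Fintype V] (E : V → V → Prop) : ℕ :=
  Finset.univ.sup (outDeg E)

/-- Maximum in-degree. -/
def maxInDeg {V : Type*} [Fintype V] (E : V → V → Prop) : ℕ :=
  Finset.univ.sup (fun v => Set.ncard {u | E u v})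

/-- Out-degree of `v` inside the subgraph `(S, E')`. -/
def subOutDeg {V : Type*} (E' : V → V → Prop) (S : Set V) (v : V) : ℕ :=
  Set.ncard {u | u ∈ S ∧ E' v u}

/-- Minimum out-degree of the subgraph `(S, E')`. -/
def minOutDeg {V : Type*} (E' : V → V → Prop) (S : Set V) : ℕ :=
  sInf {d | ∃ v ∈ S, d = subOutDeg E' S v}

/-- The largest `k` such that `E` has a `k`-core (a nonempty subgraph of minimum
out-degree at least `k`). -/
def eta {V : Type*} (E : V → V → Prop) : ℕ :=
  sSup {k | ∃ (S : Set V) (E' : V → V → Prop),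
    IsSubgraph E S E' ∧ ∀ v ∈ S, k ≤ subOutDeg E' S v}

/-- Number of directed edges. -/
def edgeCount {V : Type*} (E : V → V → Prop) : ℕ :=
  Set.ncard {p : V × V | E p.1 p.2}

/-!
On a clique of size `m` every closed out-neighborhood is the whole clique, so coloring its vertices
with `m` distinct colors is valid and the capacity is at least `m`. By Turán's theorem, a
`K_{r+1}`-free graph on `n` vertices has at most `(r - 1) n² / r` directed edges, so taking
`r = m - 1` forces a clique of size `m`.
-/

section Capacity

variable {V : Type*} {E : V → V → Prop} {S : Set V} {ℓ : ℕ}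

theorem ValidColoring.surjective {c : V → Fin ℓ} (hc : ValidColoring E S ℓ c)
    (hS : S.Nonempty) : Function.Surjective c := by
  obtain ⟨v, hv⟩ := hS
  intro i
  obtain ⟨u, -, -, hu⟩ := hc v hv i
  exact ⟨u, hu⟩

theorem ValidColoring.hasValid {c : V → Fin ℓ} (hc : ValidColoring E S ℓ c)
    (hS : S.Nonempty) : HasValid E ℓ := by
  refine ⟨S, fun u v ↦ E u v ∧ u ∈ S ∧ v ∈ S, c, ⟨hS, fun _ _ h ↦ h⟩, fun v hv i ↦ ?_⟩
  obtain ⟨u, huv, hu, hi⟩ := hc v hv i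
  exact ⟨u, huv.imp id fun h ↦ ⟨hu, h.2, hv, hu⟩, hu, hi⟩

theorem validColoring_of_pairwise {c : V → Fin ℓ} (hS : S.Pairwise E)
    (hc : Set.SurjOn c S Set.univ) : ValidColoring E S ℓ c := by
  intro v hv i
  obtain ⟨u, hu, hi⟩ := hc (Set.mem_univ i)
  refine ⟨u, ?_, hu, hi⟩
  obtain rfl | huv := eq_or_ne u v
  · exact Or.inl rfl
  · exact Or.inr ⟨hu, hS hv hu huv.symm⟩

theorem hasValid_card_of_pairwise {s : Finset V} (hs : s.Nonempty)
    (hE : (s : Set V).Pairwise E) : HasValid E s.card := by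
  have : NeZero s.card := ⟨hs.card_ne_zero⟩
  let f : Fin s.card → V := fun i ↦ s.equivFin.symm i
  have hf : Function.Injective f := Subtype.val_injective.comp s.equivFin.symm.injective
  have hsurj : Set.SurjOn (Function.invFun f) s Set.univ := fun i _ ↦
    ⟨f i, (s.equivFin.symm i).2, Function.leftInverse_invFun hf i⟩
  exact (validColoring_of_pairwise hE hsurj).hasValid hs

theorem HasValid.le_natCard [Finite V] (h : HasValid E ℓ) : ℓ ≤ Nat.card V := by
  obtain ⟨S, E', c, ⟨hS, -⟩, hc⟩ := h
  simpa using Nat.card_le_card_of_surjective c (hc.surjective hS)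

theorem HasValid.le_cap [Finite V] (h : HasValid E ℓ) : ℓ ≤ Cap E :=
  le_csSup ⟨Nat.card V, fun _ ↦ HasValid.le_natCard⟩ h

theorem card_le_cap_of_pairwise [Finite V] {s : Finset V} (hE : (s : Set V).Pairwise E) :
    s.card ≤ Cap E := by
  obtain rfl | hs := s.eq_empty_or_nonempty
  · exact Nat.zero_le _
  · exact (hasValid_card_of_pairwise hs hE).le_cap

end Capacity

section Turan

variable {V : Type*} [Fintype V] {G : SimpleGraph V} {r : ℕ}

theorem edgeCount_adj_eq_two_mul_card_edgeFinset (G : SimpleGraph V) [DecidableRel G.Adj] :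
    edgeCount G.Adj = 2 * G.edgeFinset.card := by
  classical
  rw [← G.sum_degrees_eq_twice_card_edges, edgeCount, Set.ncard_eq_toFinset_card']
  simp only [Set.toFinset_ofPred, Finset.card_filter, Fintype.sum_prod_type,
    SimpleGraph.degree, SimpleGraph.neighborFinset_eq_filter]

theorem mul_edgeCount_le_of_cliqueFree (hG : G.CliqueFree (r + 1)) :
    r * edgeCount G.Adj ≤ (r - 1) * Fintype.card V ^ 2 := by
  classical
  have hturan : G.edgeFinset.card ≤
      (SimpleGraph.turanGraph (Fintype.card V) r).edgeFinset.card :=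
    hG.card_edgeFinset_le.trans_eq SimpleGraph.card_edgeFinset_turanGraph.symm
  calc r * edgeCount G.Adj = 2 * r * G.edgeFinset.card := by
        rw [edgeCount_adj_eq_two_mul_card_edgeFinset]; ring
    _ ≤ 2 * r * (SimpleGraph.turanGraph (Fintype.card V) r).edgeFinset.card := by gcongr
    _ ≤ (r - 1) * Fintype.card V ^ 2 := SimpleGraph.mul_card_edgeFinset_turanGraph_le

theorem exists_isNClique_of_lt_mul_edgeCount
    (h : (r - 1) * Fintype.card V ^ 2 < r * edgeCount G.Adj) : ∃ s, G.IsNClique (r + 1) s := by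
  by_contra! hG
  exact h.not_ge (mul_edgeCount_le_of_cliqueFree hG)

end Turan

/-- Turán-based lower bound on the writing capacity of a dense bidirectional graph. -/
theorem turan_cap_lower_bound {V : Type*} [Fintype V] (E : V → V → Prop)
    (hsym : Symmetric E) (hirr : ∀ v, ¬ E v v) (α : ℝ) (hα0 : 0 < α) (hα1 : α ≤ 1)
    (hfloor : 2 ≤ ⌊α * (Fintype.card V : ℝ)⌋₊)
    (hE : ((Fintype.card V : ℝ)) ^ 2
        * ((⌊α * (Fintype.card V : ℝ)⌋₊ : ℝ) - 2) / ((⌊α * (Fintype.card V : ℝ)⌋₊ : ℝ) - 1)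
      < (edgeCount E : ℝ)) :
    ⌊α * (Fintype.card V : ℝ)⌋₊ ≤ Cap E := by
  let G : SimpleGraph V := { Adj := E, symm := ⟨hsym⟩, loopless := ⟨hirr⟩ }
  generalize ⌊α * (Fintype.card V : ℝ)⌋₊ = m at *
  obtain ⟨r, rfl⟩ : ∃ r, m = r + 2 := Nat.exists_eq_add_of_le' hfloor
  have hdense : r * Fintype.card V ^ 2 < (r + 1) * edgeCount E := by
    have hsub₂ : ((r + 2 : ℕ) : ℝ) - 2 = r := by push_cast; ring
    have hsub₁ : ((r + 2 : ℕ) : ℝ) - 1 = r + 1 := by push_cast; ring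
    rw [hsub₂, hsub₁, div_lt_iff₀ (by positivity), mul_comm, mul_comm (edgeCount E : ℝ)] at hE
    exact_mod_cast hE
  obtain ⟨s, hs⟩ : ∃ s, G.IsNClique (r + 2) s := exists_isNClique_of_lt_mul_edgeCount hdense
  exact hs.card_eq.ge.trans (card_le_cap_of_pairwise hs.isClique)
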